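/- arXiv:1704.06430 — 2 statements merged into one kernel-verified Lean document; each statement's English description precedes it below -/
import Mathlib

section
/- Let N ≥ 1 and Λ > 0, and let (u, v) be a classical solution of the system (P_Λ) (no sign or boundedness assumption on u, v). Then |u(x)| ≤ 1 and |v(x)| ≤ 1 for every x ∈ ℝ^N. -/
/-!
The bound is of Keller–Osserman type, obtained from the maximum principle. If `f` is any of
`u, -u, v, -v`, then `Δf ≥ f³ - f ≥ (f - 1)³` wherever `f > 1`, because the coupling term has the
favourable sign when `Λ > 0`. Such an `f` is at most `1` everywhere (`le_one_of_cube_le_lap`): on a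
ball of radius `R` about `x₀`, put `ψ = R² - |x - x₀|²`, which vanishes on the boundary, and let
`x` be a maximum point of `ψ (f - 1)`. If `f x₀ > 1`, this maximum is interior and positive, and
the first and second order conditions there (`second_order_of_isLocalMax`), summed over the
coordinate directions, give `ψ² Δf ≤ (f - 1) (2 n ψ + 8 |x - x₀|²)`. Together with the
differential inequality this yields `(ψ (f - 1))² ≤ (2 n + 8) R²` at `x`, so that
`(R² (f x₀ - 1))² ≤ (2 n + 8) R²`, which fails for large `R`.
-/

open scoped RealInnerProductSpace
open Filter

noncomputable section

/-- The Laplacian of `f : ℝ^N → ℝ`, as the sum of the pure second partial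
derivatives in the coordinate directions. -/
def lap (N : ℕ) (f : EuclideanSpace ℝ (Fin N) → ℝ) (x : EuclideanSpace ℝ (Fin N)) : ℝ :=
  ∑ i : Fin N,
    fderiv ℝ (fun y => fderiv ℝ f y (EuclideanSpace.single i 1)) x (EuclideanSpace.single i 1)

/-- `(u, v)` is a classical solution of the system `(P_Λ)` on `ℝ^N`:
`u, v` are `C²` and `-Δu = u - u³ - Λ u v²`, `-Δv = v - v³ - Λ u² v` pointwise. -/
def IsSolution (N : ℕ) (Λ : ℝ) (u v : EuclideanSpace ℝ (Fin N) → ℝ) : Prop :=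
  ContDiff ℝ 2 u ∧ ContDiff ℝ 2 v ∧
  (∀ x, -lap N u x = u x - (u x) ^ 3 - Λ * u x * (v x) ^ 2) ∧
  (∀ x, -lap N v x = v x - (v x) ^ 3 - Λ * (u x) ^ 2 * v x)

/-- Condition `(h∞)`: `u → 1`, `v → 0` as `x_N → +∞` and `u → 0`, `v → 1` as
`x_N → -∞`, uniformly with respect to `x' ∈ ℝ^{N-1}` (the dimension is `N + 1`). -/
def Hinf (N : ℕ) (u v : EuclideanSpace ℝ (Fin (N + 1)) → ℝ) : Prop :=
  (∀ ε : ℝ, 0 < ε → ∃ M : ℝ, ∀ x : EuclideanSpace ℝ (Fin (N + 1)),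
    M ≤ x (Fin.last N) → |u x - 1| < ε ∧ |v x| < ε) ∧
  (∀ ε : ℝ, 0 < ε → ∃ M : ℝ, ∀ x : EuclideanSpace ℝ (Fin (N + 1)),
    x (Fin.last N) ≤ M → |u x| < ε ∧ |v x - 1| < ε)

/-- Necessary second order condition at a local maximum, for a differentiable function whose
derivative is only assumed differentiable at the point itself. -/
lemma second_deriv_nonpos_of_isLocalMax {h h' : ℝ → ℝ} {c : ℝ}
    (hd : ∀ t, HasDerivAt h (h' t) t) (hd2 : HasDerivAt h' c 0) (hmax : IsLocalMax h 0) :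
    c ≤ 0 := by
  by_contra! hc
  have hderiv : deriv h = h' := funext fun t => (hd t).deriv
  have hmin : IsLocalMin h 0 := by
    apply isLocalMin_of_deriv_deriv_pos
    · rw [hderiv, hd2.deriv]; exact hc
    · exact hmax.deriv_eq_zero
    · exact (hd 0).continuousAt
  -- Being both a local minimum and a local maximum, `0` has a neighbourhood where `h` is constant.
  have hconst : h =ᶠ[nhds 0] fun _ => h 0 := by
    filter_upwards [hmin, hmax] with t h1 h2 using le_antisymm h2 h1
  have h0 := hconst.deriv.deriv_eq
  rw [hderiv, hd2.deriv] at h0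
  simp at h0
  exact hc.ne' h0

/-- The conditions at a maximum of `ψ g` along a line, where `ψ t = A - 2 a t - t²` is the
restriction of `R² - |x - x₀|²` to that line: the first order condition eliminates the
first derivative of `g`. -/
lemma second_order_of_isLocalMax {g g' : ℝ → ℝ} {c A a : ℝ} (hA : 0 < A)
    (hd : ∀ t, HasDerivAt g (g' t) t) (hd2 : HasDerivAt g' c 0)
    (hmax : IsLocalMax (fun t => (A - 2 * a * t - t ^ 2) * g t) 0) :
    A ^ 2 * c ≤ g 0 * (2 * A + 8 * a ^ 2) := by
  have hp : ∀ t, HasDerivAt (fun t : ℝ => A - 2 * a * t - t ^ 2) (-(2 * a) - 2 * t) t := by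
    intro t
    have h := (((hasDerivAt_id t).const_mul (2 * a)).const_sub A).sub ((hasDerivAt_id t).pow 2)
    refine (h.congr_deriv ?_)
    simp
  have hp2 : HasDerivAt (fun t : ℝ => -(2 * a) - 2 * t) (-2) 0 := by
    have h := ((hasDerivAt_id (0 : ℝ)).const_mul 2).const_sub (-(2 * a))
    refine (h.congr_deriv ?_)
    simp
  have h1 := fun t => (hp t).mul (hd t)
  have h2 := (hp2.mul (hd 0)).add ((hp 0).mul hd2)
  have h3 := second_deriv_nonpos_of_isLocalMax h1 h2 hmax
  have h4 := hmax.hasDerivAt_eq_zero (h1 0)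
  norm_num at h3 h4
  nlinarith [mul_le_mul_of_nonneg_left h3 hA.le, congrArg (fun z => a * z) h4]

/-- Keller–Osserman estimate: an entire `C²` function with `Δf ≥ (f - 1)³` on `{f > 1}` satisfies
`f ≤ 1`. -/
lemma le_one_of_cube_le_lap {n : ℕ} {f : EuclideanSpace ℝ (Fin n) → ℝ} (hf : ContDiff ℝ 2 f)
    (hlap : ∀ x, 1 < f x → (f x - 1) ^ 3 ≤ lap n f x) (x₀ : EuclideanSpace ℝ (Fin n)) :
    f x₀ ≤ 1 := by
  by_contra! h0
  -- Any `R > 0` with `R² (f x₀ - 1)² > 2 n + 8` gives a contradiction.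
  obtain ⟨R, hR, hRbig⟩ : ∃ R : ℝ, 0 < R ∧ 2 * n + 8 < (R * (f x₀ - 1)) ^ 2 := by
    have hpos : 0 < f x₀ - 1 := by linarith
    refine ⟨(2 * n + 8) / (f x₀ - 1), by positivity, ?_⟩
    rw [div_mul_cancel₀ _ hpos.ne']
    have : (0 : ℝ) ≤ n := n.cast_nonneg
    nlinarith
  set F : EuclideanSpace ℝ (Fin n) → ℝ := fun y => (R ^ 2 - ‖y - x₀‖ ^ 2) * (f y - 1) with hF
  have hFc : Continuous F := by
    have := hf.continuous
    fun_prop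
  obtain ⟨x, hx, hxmax⟩ := (isCompact_closedBall x₀ R).exists_isMaxOn
    ⟨x₀, Metric.mem_closedBall_self hR.le⟩ hFc.continuousOn
  have hFx0 : F x₀ ≤ F x := hxmax (Metric.mem_closedBall_self hR.le)
  have hFx0' : F x₀ = R ^ 2 * (f x₀ - 1) := by simp [hF]
  have hFx0pos : 0 < F x₀ := by
    rw [hFx0']
    have hpos : 0 < f x₀ - 1 := by linarith
    positivity
  have hFpos : 0 < F x := hFx0pos.trans_le hFx0
  have hxle : ‖x - x₀‖ ≤ R := by simpa [dist_eq_norm] using hx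
  have hA0 : 0 ≤ R ^ 2 - ‖x - x₀‖ ^ 2 := by nlinarith [norm_nonneg (x - x₀)]
  have hFxeq : F x = (R ^ 2 - ‖x - x₀‖ ^ 2) * (f x - 1) := rfl
  set A := R ^ 2 - ‖x - x₀‖ ^ 2 with hAdef
  have hA : 0 < A := by
    rcases hA0.eq_or_lt with h | h
    · rw [hFxeq, ← h] at hFpos; simp at hFpos
    · exact h
  have hw : 0 < f x - 1 := by
    rw [hFxeq] at hFpos
    exact (pos_iff_pos_of_mul_pos hFpos).1 hA
  have hxlt : ‖x - x₀‖ < R := by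
    by_contra! h
    nlinarith
  have hloc : IsLocalMax F x :=
    hxmax.isLocalMax (mem_of_superset (Metric.isOpen_ball.mem_nhds (by
      simpa [dist_eq_norm] using hxlt)) Metric.ball_subset_closedBall)
  have hdir : ∀ i : Fin n, A ^ 2 * fderiv ℝ (fun y => fderiv ℝ f y (EuclideanSpace.single i 1)) x
      (EuclideanSpace.single i 1) ≤ (f x - 1) * (2 * A + 8 * ((x - x₀) i) ^ 2) := by
    intro i
    set e : EuclideanSpace ℝ (Fin n) := EuclideanSpace.single i 1 with he
    have hline : ∀ t : ℝ, HasDerivAt (fun t : ℝ => x + t • e) e t := by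
      intro t
      simpa using ((hasDerivAt_id t).smul_const e).const_add x
    have hfd : Differentiable ℝ f := hf.differentiable (by norm_num)
    have hfd2 : Differentiable ℝ (fun y => fderiv ℝ f y e) :=
      ((hf.fderiv_right (m := 1) (by norm_num)).clm_apply contDiff_const).differentiable
        (by norm_num)
    have hg : ∀ t : ℝ, HasDerivAt (fun t : ℝ => f (x + t • e) - 1)
        (fderiv ℝ f (x + t • e) e) t := fun t =>
      ((hfd (x + t • e)).hasFDerivAt.comp_hasDerivAt t (hline t)).sub_const 1
    have hg2 : HasDerivAt (fun t : ℝ => fderiv ℝ f (x + t • e) e)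
        (fderiv ℝ (fun y => fderiv ℝ f y e) x e) 0 := by
      have h := (hfd2 (x + (0 : ℝ) • e)).hasFDerivAt.comp_hasDerivAt 0 (hline 0)
      simpa [Function.comp_def] using h
    have hnorm : ∀ t : ℝ, R ^ 2 - ‖x + t • e - x₀‖ ^ 2 = A - 2 * (x - x₀) i * t - t ^ 2 := by
      intro t
      have h1 : x + t • e - x₀ = (x - x₀) + t • e := by abel
      rw [h1, norm_add_sq_real, inner_smul_right, norm_smul, he,
        EuclideanSpace.inner_single_right]
      simp [hAdef]
      ring
    have hm : IsLocalMax
        (fun t : ℝ => (A - 2 * (x - x₀) i * t - t ^ 2) * (f (x + t • e) - 1)) 0 := by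
      have h1 : IsLocalMax F (x + (0 : ℝ) • e) := by simpa using hloc
      have h2 : IsLocalMax (F ∘ fun t : ℝ => x + t • e) 0 :=
        h1.comp_continuous (g := fun t : ℝ => x + t • e) (hline 0).continuousAt
      have h3 : (F ∘ fun t : ℝ => x + t • e)
          = fun t : ℝ => (A - 2 * (x - x₀) i * t - t ^ 2) * (f (x + t • e) - 1) := by
        funext t
        simp only [Function.comp, hF, hnorm]
      rwa [h3] at h2
    simpa using second_order_of_isLocalMax hA hg hg2 hm
  have hsum : A ^ 2 * lap n f x ≤ (f x - 1) * (2 * n * A + 8 * ‖x - x₀‖ ^ 2) := by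
    have h := Finset.sum_le_sum fun i (_ : i ∈ Finset.univ) => hdir i
    rw [← Finset.mul_sum, ← Finset.mul_sum, Finset.sum_add_distrib,
      ← Finset.mul_sum Finset.univ _ (8 : ℝ)] at h
    rw [EuclideanSpace.real_norm_sq_eq]
    have h' : ∑ _i : Fin n, 2 * A = 2 * n * A := by simp; ring
    rwa [h'] at h
  have h1 : A ^ 2 * (f x - 1) ^ 3 ≤ A ^ 2 * lap n f x :=
    mul_le_mul_of_nonneg_left (hlap x (by linarith)) (by positivity)
  have h2 : 2 * n * A + 8 * ‖x - x₀‖ ^ 2 ≤ (2 * n + 8) * R ^ 2 := by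
    have hn : (0 : ℝ) ≤ n := n.cast_nonneg
    nlinarith [mul_nonneg hn (sq_nonneg ‖x - x₀‖)]
  have h3 : (F x) ^ 2 ≤ (2 * n + 8) * R ^ 2 := by
    have h4 : (f x - 1) * (F x) ^ 2 ≤ (f x - 1) * (2 * n * A + 8 * ‖x - x₀‖ ^ 2) := by
      rw [hFxeq]
      calc _ = A ^ 2 * (f x - 1) ^ 3 := by ring
        _ ≤ _ := h1.trans hsum
    exact (le_of_mul_le_mul_left h4 hw).trans h2
  have h5 : (F x₀) ^ 2 ≤ (F x) ^ 2 := pow_le_pow_left₀ hFx0pos.le hFx0 2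
  have h6 : (F x₀) ^ 2 = (R * (f x₀ - 1)) ^ 2 * R ^ 2 := by rw [hFx0']; ring
  nlinarith [mul_lt_mul_of_pos_right hRbig (pow_pos hR 2)]

lemma lap_neg (n : ℕ) (f : EuclideanSpace ℝ (Fin n) → ℝ) (x : EuclideanSpace ℝ (Fin n)) :
    lap n (fun y => -f y) x = -lap n f x := by
  simp [lap, fderiv_fun_neg]

/-- The scalar form of the system: `Δf = f³ - f + p f` with a nonnegative potential `p`, which for
`f = u` is `Λ v²`. -/
lemma abs_le_one_of_lap_eq {n : ℕ} {f p : EuclideanSpace ℝ (Fin n) → ℝ} (hf : ContDiff ℝ 2 f)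
    (hp : ∀ x, 0 ≤ p x) (heq : ∀ x, lap n f x = f x ^ 3 - f x + p x * f x)
    (x : EuclideanSpace ℝ (Fin n)) : |f x| ≤ 1 := by
  have key : ∀ s q : ℝ, 1 < s → 0 ≤ q → (s - 1) ^ 3 ≤ s ^ 3 - s + q * s := by
    intro s q hs hq
    nlinarith [mul_nonneg hq (by linarith : (0 : ℝ) ≤ s), mul_pos (by linarith : 0 < s - 1)
      (by linarith : 0 < s)]
  rw [abs_le]
  constructor
  · have h := le_one_of_cube_le_lap (f := fun y => -f y) hf.neg (fun y hy => by
      rw [lap_neg, heq]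
      have := key (-f y) (p y) hy (hp y)
      linarith) x
    linarith
  · exact le_one_of_cube_le_lap hf (fun y hy => by
      rw [heq]
      exact key _ _ hy (hp y)) x

/-- Theorem 1.3 (i): universal bound `|u| ≤ 1`, `|v| ≤ 1` for `Λ > 0`. -/
theorem stmt_2 (N : ℕ) (Λ : ℝ) (hΛ : 0 < Λ)
    (u v : EuclideanSpace ℝ (Fin (N + 1)) → ℝ)
    (hsol : IsSolution (N + 1) Λ u v) :
    ∀ x, |u x| ≤ 1 ∧ |v x| ≤ 1 := by
  intro x
  obtain ⟨hu, hv, h1, h2⟩ := hsol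
  exact ⟨abs_le_one_of_lap_eq (p := fun y => Λ * v y ^ 2) hu (fun y => by positivity)
      (fun y => by linarith [h1 y]) x,
    abs_le_one_of_lap_eq (p := fun y => Λ * u y ^ 2) hv (fun y => by positivity)
      (fun y => by linarith [h2 y]) x⟩
end
end

section
/- Let N ≥ 1 and Λ ≥ 1, and let (u, v) be a classical solution of the system (P_Λ) (no sign or boundedness assumption on u, v). Then u(x)² + v(x)² ≤ 1 for every x ∈ ℝ^N. -/
/-!
The bound is a Keller–Osserman estimate. Put `z = u² + v² - 1`. Since `Λ ≥ 1`, the system gives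
`Δz ≥ 2 (u⁴ + v⁴ + 2Λu²v² - u² - v²) ≥ 2z² + 2z`.

Fix `x₀` and `R > 0`, let `g(x) = R² - |x - x₀|²`, and suppose `z(x₀) > 0`. The function `g² z` has a
maximum over the closed ball of radius `R` about `x₀`; it is positive there, so it is attained at an
interior point `p` with `z(p) > 0`. The first- and second-order conditions along each coordinate
line through `p` (`second_order_along_line`) add up, in dimension `n`, to
`g² Δz ≤ z (24 |p - x₀|² + 4 n g) ≤ z R² (24 + 4n)` at `p`. Combined with `Δz > 2z²` this yields
`2 R⁴ z(x₀) ≤ 2 g(p)² z(p) ≤ R² (24 + 4n)`, and letting `R → ∞` contradicts `z(x₀) > 0`.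
-/

open scoped RealInnerProductSpace
open Filter

noncomputable section

/-- Necessary first- and second-order conditions at a local maximum on the line. -/
lemma local_max_second_order {f f' : ℝ → ℝ} {c : ℝ} (hf : ∀ t, HasDerivAt f (f' t) t)
    (hf' : HasDerivAt f' c 0) (hmax : IsLocalMax f 0) : f' 0 = 0 ∧ c ≤ 0 := by
  have h0 : f' 0 = 0 := hmax.hasDerivAt_eq_zero (hf 0)
  refine ⟨h0, ?_⟩
  by_contra! hc
  have hd : deriv f = f' := funext fun t => (hf t).deriv
  have hmin : IsLocalMin f 0 :=
    isLocalMin_of_deriv_deriv_pos (by rw [hd, hf'.deriv]; exact hc) (by rw [hd, h0])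
      (hf 0).continuousAt
  -- A point that is both a local maximum and a local minimum makes `f` locally constant.
  have hconst : f =ᶠ[nhds 0] fun _ => f 0 := by
    filter_upwards [hmax, hmin] with t h1 h2
    exact le_antisymm h1 h2
  have h1 : deriv f =ᶠ[nhds 0] fun _ => 0 := by
    simpa using hconst.deriv
  rw [hd] at h1
  have h2 := h1.deriv_eq
  rw [hf'.deriv] at h2
  simp at h2
  linarith

/-- The maximum conditions for `g² z`, `z = U² + V² - 1`, restricted to a coordinate line: here
`g - 2 a t - t²` is the restriction of `R² - |x - x₀|²`, and `c`, `d` are the second derivatives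
of `U`, `V` at the maximum point `t = 0`. -/
lemma second_order_along_line {U V U' V' : ℝ → ℝ} {c d g a : ℝ}
    (hU : ∀ t, HasDerivAt U (U' t) t) (hV : ∀ t, HasDerivAt V (V' t) t)
    (hU' : HasDerivAt U' c 0) (hV' : HasDerivAt V' d 0) (hg : 0 < g)
    (hmax : IsLocalMax (fun t => (g - 2 * a * t - t ^ 2) ^ 2 * (U t ^ 2 + V t ^ 2 - 1)) 0) :
    g ^ 2 * (2 * U 0 * c + 2 * V 0 * d) ≤ (U 0 ^ 2 + V 0 ^ 2 - 1) * (24 * a ^ 2 + 4 * g) := by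
  have hG : ∀ t : ℝ, HasDerivAt (fun t : ℝ => g - 2 * a * t - t ^ 2) (-2 * a - 2 * t) t := by
    intro t
    have := (((hasDerivAt_id t).const_mul (2 * a)).const_sub g).sub ((hasDerivAt_id t).pow 2)
    refine this.congr_deriv ?_
    simp
  have hG' : HasDerivAt (fun t : ℝ => -2 * a - 2 * t) (-2) 0 := by
    have := ((hasDerivAt_id (0 : ℝ)).const_mul 2).const_sub (-2 * a)
    refine this.congr_deriv ?_
    simp
  have hZ : ∀ t, HasDerivAt (fun t => U t ^ 2 + V t ^ 2 - 1) (2 * U t * U' t + 2 * V t * V' t) t := by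
    intro t
    refine ((((hU t).pow 2).add ((hV t).pow 2)).sub_const 1).congr_deriv ?_
    simp
  have hZ' := (((hU 0).const_mul 2).mul hU').add (((hV 0).const_mul 2).mul hV')
  have hF := fun t => ((hG t).pow 2).mul (hZ t)
  have hF' := ((((hG 0).const_mul 2).mul hG').mul (hZ 0)).add (((hG 0).pow 2).mul hZ')
  obtain ⟨h1, h2⟩ := local_max_second_order
    (f' := fun t => (2 * (g - 2 * a * t - t ^ 2) * (-2 * a - 2 * t)) * (U t ^ 2 + V t ^ 2 - 1)
      + (g - 2 * a * t - t ^ 2) ^ 2 * (2 * U t * U' t + 2 * V t * V' t))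
    (fun t => (hF t).congr_deriv (by simp)) hF' hmax
  simp at h1 h2
  set z := U 0 ^ 2 + V 0 ^ 2 - 1
  set z' := 2 * U 0 * U' 0 + 2 * V 0 * V' 0
  have h3 : g * z' = 4 * a * z := by
    have : g * (g * z' - 4 * a * z) = 0 := by linear_combination h1
    rcases mul_eq_zero.1 this with h | h <;> linarith
  have h4 : g ^ 2 * (2 * U 0 * c + 2 * V 0 * d) + (g ^ 2 * (2 * U' 0 ^ 2 + 2 * V' 0 ^ 2))
      - z * (24 * a ^ 2 + 4 * g) ≤ 0 := by
    have h5 : (-8 * a) * (g * z') = (-8 * a) * (4 * a * z) := by rw [h3]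
    nlinarith [h2, h5]
  have : 0 ≤ g ^ 2 * (2 * U' 0 ^ 2 + 2 * V' 0 ^ 2) := by positivity
  linarith

lemma norm_sq_add_single {n : ℕ} (y : EuclideanSpace ℝ (Fin n)) (i : Fin n) (t : ℝ) :
    ‖y + t • EuclideanSpace.single i (1 : ℝ)‖ ^ 2 = ‖y‖ ^ 2 + 2 * y i * t + t ^ 2 := by
  rw [norm_add_sq_real, inner_smul_right, norm_smul]
  simp [EuclideanSpace.inner_single_right]
  ring

lemma hasDerivAt_line {n : ℕ} {f : EuclideanSpace ℝ (Fin n) → ℝ} (hf : Differentiable ℝ f)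
    (p e : EuclideanSpace ℝ (Fin n)) (t : ℝ) :
    HasDerivAt (fun t : ℝ => f (p + t • e)) (fderiv ℝ f (p + t • e) e) t := by
  have h1 : HasDerivAt (fun t : ℝ => p + t • e) e t := by
    simpa using ((hasDerivAt_id t).smul_const e).const_add p
  exact (hf (p + t • e)).hasFDerivAt.comp_hasDerivAt t h1

lemma differentiable_fderiv_apply {n : ℕ} {f : EuclideanSpace ℝ (Fin n) → ℝ}
    (hf : ContDiff ℝ 2 f) (e : EuclideanSpace ℝ (Fin n)) :
    Differentiable ℝ (fun y => fderiv ℝ f y e) := by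
  have : ContDiff ℝ 1 (fderiv ℝ f) := hf.fderiv_right (by norm_num)
  exact (this.differentiable (by norm_num)).clm_apply (differentiable_const e)

/-- The sum over coordinate directions of `second_order_along_line`, at an interior maximum point
`p` of `(R² - |x - x₀|²)² (u² + v² - 1)`. -/
lemma laplacian_bound_at_max {n : ℕ} {u v : EuclideanSpace ℝ (Fin n) → ℝ}
    (hu : ContDiff ℝ 2 u) (hv : ContDiff ℝ 2 v) {x₀ p : EuclideanSpace ℝ (Fin n)} {R : ℝ}
    (hg : 0 < R ^ 2 - ‖p - x₀‖ ^ 2)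
    (hmax : IsLocalMax (fun x => (R ^ 2 - ‖x - x₀‖ ^ 2) ^ 2 * (u x ^ 2 + v x ^ 2 - 1)) p) :
    (R ^ 2 - ‖p - x₀‖ ^ 2) ^ 2 * (2 * u p * lap n u p + 2 * v p * lap n v p)
      ≤ (u p ^ 2 + v p ^ 2 - 1)
        * (24 * ‖p - x₀‖ ^ 2 + 4 * n * (R ^ 2 - ‖p - x₀‖ ^ 2)) := by
  have key : ∀ i : Fin n, _ := fun i => by
    let e : EuclideanSpace ℝ (Fin n) := EuclideanSpace.single i 1
    have hp : p + (0 : ℝ) • e = p := by simp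
    have hm : IsLocalMax (fun t : ℝ => (R ^ 2 - ‖p - x₀‖ ^ 2 - 2 * (p - x₀) i * t - t ^ 2) ^ 2
        * (u (p + t • e) ^ 2 + v (p + t • e) ^ 2 - 1)) 0 := by
      have hc : ContinuousAt (fun t : ℝ => p + t • e) 0 := by fun_prop
      have h1 := IsLocalMax.comp_continuous (g := fun t : ℝ => p + t • e) (b := 0)
        (by rw [hp]; exact hmax) hc
      convert h1 using 2 with t
      simp only [Function.comp]
      have : p + t • e - x₀ = (p - x₀) + t • e := by abel
      rw [this, norm_sq_add_single]
      ring
    have := second_order_along_line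
      (fun t => hasDerivAt_line (hu.differentiable (by norm_num)) p e t)
      (fun t => hasDerivAt_line (hv.differentiable (by norm_num)) p e t)
      (hasDerivAt_line (differentiable_fderiv_apply hu e) p e 0)
      (hasDerivAt_line (differentiable_fderiv_apply hv e) p e 0) hg hm
    rw [hp] at this
    exact this
  have hs := Finset.sum_le_sum fun i (_ : i ∈ Finset.univ) => key i
  have hn : ‖p - x₀‖ ^ 2 = ∑ i, (p - x₀) i ^ 2 := EuclideanSpace.real_norm_sq_eq _
  simp only [← Finset.mul_sum, Finset.sum_add_distrib, ← hn] at hs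
  simp only [Finset.sum_const, Finset.card_univ, Fintype.card_fin, nsmul_eq_mul] at hs
  simp only [lap]
  linarith

/-- The local Keller–Osserman estimate: `u² + v² - 1` at `x₀` is controlled by `R⁻²`. -/
lemma keller_osserman {n : ℕ} {Λ : ℝ} (hΛ : 1 ≤ Λ) {u v : EuclideanSpace ℝ (Fin n) → ℝ}
    (hsol : IsSolution n Λ u v) (x₀ : EuclideanSpace ℝ (Fin n))
    (hz : 0 < u x₀ ^ 2 + v x₀ ^ 2 - 1) {R : ℝ} (hR : 0 < R) :
    2 * R ^ 2 * (u x₀ ^ 2 + v x₀ ^ 2 - 1) ≤ 24 + 4 * n := by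
  obtain ⟨hu, hv, hlu, hlv⟩ := hsol
  set F : EuclideanSpace ℝ (Fin n) → ℝ :=
    fun x => (R ^ 2 - ‖x - x₀‖ ^ 2) ^ 2 * (u x ^ 2 + v x ^ 2 - 1) with hF
  have hcu := hu.continuous
  have hcv := hv.continuous
  have hFc : Continuous F := by fun_prop
  have hx₀ : x₀ ∈ Metric.closedBall x₀ R := Metric.mem_closedBall_self hR.le
  obtain ⟨p, hpB, hp⟩ := (isCompact_closedBall x₀ R).exists_isMaxOn ⟨x₀, hx₀⟩ hFc.continuousOn
  have hF0 : F x₀ = R ^ 4 * (u x₀ ^ 2 + v x₀ ^ 2 - 1) := by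
    simp only [hF, sub_self, norm_zero]; ring
  have hle : F x₀ ≤ F p := hp hx₀
  have hFp : 0 < F p := lt_of_lt_of_le (by rw [hF0]; positivity) hle
  have hpR : ‖p - x₀‖ ≤ R := by simpa [dist_eq_norm] using hpB
  have hpR' : ‖p - x₀‖ < R := by
    refine lt_of_le_of_ne hpR fun h => ?_
    simp [hF, h] at hFp
  have hg : 0 < R ^ 2 - ‖p - x₀‖ ^ 2 := by nlinarith [norm_nonneg (p - x₀)]
  have hzp : 0 < u p ^ 2 + v p ^ 2 - 1 := pos_of_mul_pos_right hFp (sq_nonneg _)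
  have hloc : IsLocalMax F p :=
    hp.isLocalMax (Filter.mem_of_superset
      (Metric.isOpen_ball.mem_nhds (by simpa [dist_eq_norm] using hpR'))
      Metric.ball_subset_closedBall)
  have hb := laplacian_bound_at_max hu hv hg hloc
  set r := ‖p - x₀‖
  set g := R ^ 2 - r ^ 2 with hgdef
  set z := u p ^ 2 + v p ^ 2 - 1 with hzdef
  have hlap : 2 * z ^ 2 ≤ 2 * u p * lap n u p + 2 * v p * lap n v p := by
    have h1 := hlu p
    have h2 := hlv p
    have h3 : 2 * u p * lap n u p + 2 * v p * lap n v p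
        = 2 * z ^ 2 + 2 * z + 4 * (Λ - 1) * (u p ^ 2 * v p ^ 2) := by
      rw [hzdef]; linear_combination -2 * u p * h1 - 2 * v p * h2
    have h4 : 0 ≤ (Λ - 1) * (u p ^ 2 * v p ^ 2) :=
      mul_nonneg (by linarith) (by positivity)
    linarith
  have h5 : g ^ 2 * (2 * z ^ 2) ≤ z * (24 * r ^ 2 + 4 * n * g) :=
    (mul_le_mul_of_nonneg_left hlap (sq_nonneg g)).trans hb
  have h6 : g ^ 2 * (2 * z) ≤ 24 * r ^ 2 + 4 * n * g :=
    le_of_mul_le_mul_left (by linarith) hzp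
  have h7 : 24 * r ^ 2 + 4 * n * g ≤ R ^ 2 * (24 + 4 * n) := by
    have : (0 : ℝ) ≤ n * r ^ 2 := by positivity
    rw [hgdef] at hg ⊢
    nlinarith
  have h8 : R ^ 4 * (u x₀ ^ 2 + v x₀ ^ 2 - 1) ≤ g ^ 2 * z := by rw [← hF0]; exact hle
  refine le_of_mul_le_mul_left ?_ (pow_pos hR 2)
  linarith

/-- Theorem 1.3 (ii): universal bound `u² + v² ≤ 1` for `Λ ≥ 1`. -/
theorem stmt_3 (N : ℕ) (Λ : ℝ) (hΛ : 1 ≤ Λ)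
    (u v : EuclideanSpace ℝ (Fin (N + 1)) → ℝ)
    (hsol : IsSolution (N + 1) Λ u v) :
    ∀ x, (u x) ^ 2 + (v x) ^ 2 ≤ 1 := by
  intro x
  by_contra! h
  have hz : 0 < u x ^ 2 + v x ^ 2 - 1 := by linarith
  set z := u x ^ 2 + v x ^ 2 - 1 with hzdef
  set C : ℝ := 24 + 4 * ((N + 1 : ℕ) : ℝ)
  have hC : 0 < C := by positivity
  -- `R² = C / z` violates the Keller–Osserman estimate `2 R² z ≤ C`.
  have hk := keller_osserman hΛ hsol x hz (R := √(C / z)) (Real.sqrt_pos.2 (by positivity))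
  rw [Real.sq_sqrt (by positivity), ← hzdef] at hk
  have : 2 * (C / z) * z = 2 * C := by field_simp
  linarith
end
end
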